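/- arXiv:2309.15598 — 2 statements merged into one kernel-verified Lean document; each statement's English description precedes it below -/
import Mathlib

section
/- Let K ⊂ ℝ^{n+1} be a smooth, strictly convex body with the origin in its interior, whose support function h and Gauss curvature 𝒦 satisfy the isotropic L_p dual Minkowski equation h^{p-1} |Dh|^{n+1-q} 𝒦 = 1 on S^n. Then the polar body K* satisfies the isotropic L_{−q} dual Minkowski equation (h*)^{−q−1} |Dh*|^{n+1+p} 𝒦* = 1 on S^n, where h* and 𝒦* are the support function and Gauss curvature of ∂K*. -/
open MeasureTheory Matrix Metric
open scoped RealInnerProductSpace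

noncomputable section

/-- Euclidean space `ℝ^{n+1}`. -/
abbrev Euc (n : ℕ) : Type := EuclideanSpace ℝ (Fin (n + 1))

/-- The Euclidean Hessian matrix of `H : ℝ^{n+1} → ℝ` at `x`. -/
def ehess (n : ℕ) (H : Euc n → ℝ) (x : Euc n) : Matrix (Fin (n + 1)) (Fin (n + 1)) ℝ :=
  Matrix.of fun i j =>
    fderiv ℝ (fun y => fderiv ℝ H y (EuclideanSpace.single j 1)) x (EuclideanSpace.single i 1)

/-- For the 1-homogeneous extension `H` of the support function `h` and `x ∈ S^n`, the matrix
`D²H(x) + h(x)·x xᵀ`.  Its restriction to the tangent space `x^⊥ = T_x S^n` is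
`A[h] = ∇̄²h + h ḡ`, and `x` is an eigenvector with eigenvalue `h(x)`. -/
def bmat (n : ℕ) (H : Euc n → ℝ) (x : Euc n) : Matrix (Fin (n + 1)) (Fin (n + 1)) ℝ :=
  ehess n H x + Matrix.of fun i j => H x * (x i * x j)

/-- `σ_n = det A[h] = det(∇̄²h + h ḡ)/det ḡ`, computed as `det(bmat)/h`. -/
def sigman (n : ℕ) (H : Euc n → ℝ) (x : Euc n) : ℝ :=
  Matrix.det (bmat n H x) / H x

/-- The Gauss curvature `𝒦 = 1/σ_n`. -/
def gaussCurv (n : ℕ) (H : Euc n → ℝ) (x : Euc n) : ℝ := (sigman n H x)⁻¹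

/-- The round (spherical) gradient `∇̄f` at `x ∈ S^n`: the Euclidean gradient of the
0-homogeneous extension `y ↦ f(y/‖y‖)`.  It depends only on `f|_{S^n}` and lies in `T_x S^n`. -/
def sphGrad (n : ℕ) (f : Euc n → ℝ) (x : Euc n) : Euc n :=
  gradient (fun y => f (‖y‖⁻¹ • y)) x

/-- The function `log (h^{n+2}/𝒦)` (as a function of `y`; on the sphere it agrees with the
centro-affine expression appearing in the paper). -/
def logQ (n : ℕ) (H : Euc n → ℝ) (y : Euc n) : ℝ :=
  Real.log ((H y) ^ (n + 2) / gaussCurv n H y)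

/-- The centro-affine inner product `g(∇f, ∇u) = h ⟨A[h]⁻¹ ∇̄f, ∇̄u⟩` of the `g`-gradients of
`f` and `u`, where `g = A[h]/h` is the centro-affine metric. -/
def gInner (n : ℕ) (H f u : Euc n → ℝ) (x : Euc n) : ℝ :=
  H x * ∑ i, (bmat n H x)⁻¹.mulVec (fun j => sphGrad n f x j) i * sphGrad n u x i

/-- The squared centro-affine norm `|∇f|_g²` of the `g`-gradient of `f`. -/
def gNormSq (n : ℕ) (H f : Euc n → ℝ) (x : Euc n) : ℝ := gInner n H f f x

/-- The centro-affine Laplacian `Δf = div_g(∇ f)` (with respect to the centro-affine connection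
`∇` induced by the centro-affine normal `ξ = X`, and the centro-affine metric `g = A[h]/h`),
computed via the identity `Δf = tr_g(A[hf]/h) - n f`, i.e.
`Δf = tr(B[h]⁻¹ B[hf]) - (n+1) f` where `B[u] = D²ũ + u·x xᵀ` for the 1-homogeneous
extension `ũ` of `u`. -/
def caLap (n : ℕ) (H f : Euc n → ℝ) (x : Euc n) : ℝ :=
  Matrix.trace ((bmat n H x)⁻¹ * bmat n (fun y => H y * f (‖y‖⁻¹ • y)) x) - (n + 1) * f x

/-- The spherical Lebesgue measure on `S^n ⊂ ℝ^{n+1}` (up to a positive constant). -/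
def sphMeasure (n : ℕ) : Measure (sphere (0 : Euc n) 1) :=
  (volume : Measure (Euc n)).toSphere

/-- The density of the cone-volume-type measure `dV = h σ_n dμ` with respect to the spherical
Lebesgue measure. -/
def volDens (n : ℕ) (H : Euc n → ℝ) (x : Euc n) : ℝ := H x * sigman n H x

lemma pb_euler {n : ℕ} {H : Euc n → ℝ} (hh : ∀ c : ℝ, 0 < c → ∀ x : Euc n, H (c • x) = c * H x)
    {x : Euc n} (hd : DifferentiableAt ℝ H x) : fderiv ℝ H x x = H x := by
  have h1 : HasDerivAt (fun t : ℝ => x + t • x) x 0 := by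
    simpa using ((hasDerivAt_id (0:ℝ)).smul_const x).const_add x
  have h2 : HasDerivAt (fun t : ℝ => H (x + t • x)) (fderiv ℝ H x x) 0 := by
    have : HasFDerivAt H (fderiv ℝ H x) (x + (0:ℝ) • x) := by simpa using hd.hasFDerivAt
    exact this.comp_hasDerivAt (0:ℝ) h1
  have h3 : HasDerivAt (fun t : ℝ => (1 + t) * H x) (H x) 0 := by
    simpa using ((hasDerivAt_id (0:ℝ)).const_add 1).mul_const (H x)
  refine h2.unique (h3.congr_of_eventuallyEq ?_)
  filter_upwards [lt_mem_nhds (show (-1:ℝ) < 0 by norm_num)] with t ht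
  have : x + t • x = (1 + t) • x := by rw [add_smul, one_smul]
  rw [this, hh _ (by linarith)]

lemma pb_tangent {n : ℕ} {H : Euc n → ℝ} (hh : ∀ c : ℝ, 0 < c → ∀ x : Euc n, H (c • x) = c * H x)
    (hc : ConvexOn ℝ Set.univ H)
    {x : Euc n} (hd : DifferentiableAt ℝ H x) (z : Euc n) : fderiv ℝ H x z ≤ H z := by
  have hsub : ∀ a b : Euc n, H (a + b) ≤ H a + H b := by
    intro a b
    have h := hc.2 (Set.mem_univ a) (Set.mem_univ b) (show (0:ℝ) ≤ 1/2 by norm_num)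
      (show (0:ℝ) ≤ 1/2 by norm_num) (by norm_num)
    rw [← smul_add, hh _ (by norm_num)] at h
    simp only [smul_eq_mul] at h
    linarith
  have h1 : HasDerivAt (fun t : ℝ => x + t • z) z 0 := by
    simpa using ((hasDerivAt_id (0:ℝ)).smul_const z).const_add x
  have h2 : HasDerivAt (fun t : ℝ => H (x + t • z)) (fderiv ℝ H x z) 0 := by
    have : HasFDerivAt H (fderiv ℝ H x) (x + (0:ℝ) • z) := by simpa using hd.hasFDerivAt
    exact this.comp_hasDerivAt (0:ℝ) h1
  refine le_of_tendsto h2.tendsto_slope_zero_right ?_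
  filter_upwards [self_mem_nhdsWithin] with t ht
  have ht' : (0:ℝ) < t := ht
  have := hsub x (t • z)
  rw [hh t ht'] at this
  simp only [zero_add, zero_smul, add_zero, smul_eq_mul]
  rw [inv_mul_le_iff₀ ht']
  linarith

lemma pb_fderiv_smul {n : ℕ} {H : Euc n → ℝ}
    (hh : ∀ c : ℝ, 0 < c → ∀ x : Euc n, H (c • x) = c * H x) {c : ℝ} (hc : 0 < c)
    (x : Euc n) (hd : DifferentiableAt ℝ H x) : fderiv ℝ H (c • x) = fderiv ℝ H x := by
  have h1 := fderiv_comp_smul (𝕜 := ℝ) (f := H) (x := x) c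
  have h2 : (fun y => H (c • y)) = fun y => c • H y := by
    funext y; simpa using hh c hc y
  rw [show (H <| c • ·) = fun y => c • H y from h2, fderiv_fun_const_smul hd] at h1
  exact ((smul_right_injective _ hc.ne') h1).symm

lemma pb_det {m : ℕ} (M : Matrix (Fin m) (Fin m) ℝ) (v a : Fin m → ℝ) (h : ℝ)
    (hs : Mᵀ = M) (hv : M *ᵥ v = 0) (h1 : v ⬝ᵥ v = 1) (ha : v ⬝ᵥ a ≠ 0) :
    (M + h • vecMulVec v v).det = (M + (h / (v ⬝ᵥ a)^2) • vecMulVec a a).det := by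
  have hv' : v ᵥ* M = 0 := by rw [← hs, vecMul_transpose, hv]
  set x : Fin m → ℝ := (v ⬝ᵥ a)⁻¹ • a - v with hx
  set E : Matrix (Fin m) (Fin m) ℝ := 1 + vecMulVec x v with hE
  have hdet : E.det = 1 := by
    rw [hE, vecMulVec_eq Unit, det_one_add_replicateCol_mul_replicateRow, hx, dotProduct_sub,
      dotProduct_smul, h1, smul_eq_mul, inv_mul_cancel₀ ha]
    ring
  have key : E * (M + h • vecMulVec v v) * Eᵀ = M + (h / (v ⬝ᵥ a)^2) • vecMulVec a a := by
    have hEM : E * M = M := by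
      rw [hE, add_mul, one_mul, vecMulVec_mul, hv']; simp
    have hME : M * Eᵀ = M := by
      have := congrArg transpose hEM
      rwa [transpose_mul, hs] at this
    have hEv : E *ᵥ v = (v ⬝ᵥ a)⁻¹ • a := by
      rw [hE, add_mulVec, one_mulVec, vecMulVec_mulVec, h1]; simp [hx]
    rw [mul_add, add_mul, hEM, hME, Matrix.mul_smul, Matrix.smul_mul, mul_vecMulVec, vecMulVec_mul,
      vecMul_transpose, hEv]
    congr 1
    ext i j
    simp [vecMulVec_apply]
    field_simp
  rw [← key, det_mul, det_mul, det_transpose, hdet]; ring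

lemma pb_sum {n : ℕ} (L : Euc n →L[ℝ] ℝ) (x : Euc n) :
    ∑ i, x i * L (EuclideanSpace.single i 1) = L x := by
  have h : x = ∑ i, x i • EuclideanSpace.single i (1:ℝ) := by
    ext j
    simp [Pi.single_apply]
  conv_rhs => rw [h]
  simp

lemma pb_cda {n : ℕ} {H : Euc n → ℝ} (hs : ContDiffOn ℝ (⊤ : ℕ∞) H {(0 : Euc n)}ᶜ)
    {x : Euc n} (hx : x ≠ 0) : ContDiffAt ℝ (⊤ : ℕ∞) H x :=
  hs.contDiffAt (isOpen_compl_singleton.mem_nhds hx)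

lemma pb_diff {n : ℕ} {H : Euc n → ℝ} (hs : ContDiffOn ℝ (⊤ : ℕ∞) H {(0 : Euc n)}ᶜ)
    {x : Euc n} (hx : x ≠ 0) : DifferentiableAt ℝ H x :=
  (pb_cda hs hx).differentiableAt (by simp)

lemma pb_diff2 {n : ℕ} {H : Euc n → ℝ} (hs : ContDiffOn ℝ (⊤ : ℕ∞) H {(0 : Euc n)}ᶜ)
    {x : Euc n} (hx : x ≠ 0) : DifferentiableAt ℝ (fderiv ℝ H) x :=
  ((pb_cda hs hx).fderiv_right (m := 1) (WithTop.coe_le_coe.2 (le_top : (1 + 1 : ℕ∞) ≤ ⊤))).differentiableAt (by simp)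

lemma pb_diffg {n : ℕ} {H : Euc n → ℝ} (hs : ContDiffOn ℝ (⊤ : ℕ∞) H {(0 : Euc n)}ᶜ)
    {x : Euc n} (hx : x ≠ 0) (z : Euc n) : DifferentiableAt ℝ (fun y => fderiv ℝ H y z) x :=
  (pb_diff2 hs hx).clm_apply (differentiableAt_const z)

lemma pb_null {n : ℕ} {H : Euc n → ℝ} (hh : ∀ c : ℝ, 0 < c → ∀ x : Euc n, H (c • x) = c * H x)
    (hs : ContDiffOn ℝ (⊤ : ℕ∞) H {(0 : Euc n)}ᶜ)
    {x : Euc n} (hx : x ≠ 0) : (fun i => x i) ᵥ* ehess n H x = 0 := by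
  funext j
  have h0 : ((fun i => x i) ᵥ* ehess n H x) j
      = fderiv ℝ (fun y => fderiv ℝ H y (EuclideanSpace.single j 1)) x x := by
    rw [← pb_sum]; rfl
  rw [h0]
  have h1 : HasDerivAt (fun t : ℝ => x + t • x) x 0 := by
    simpa using ((hasDerivAt_id (0:ℝ)).smul_const x).const_add x
  have h2 : HasDerivAt (fun t : ℝ => fderiv ℝ H (x + t • x) (EuclideanSpace.single j 1))
      (fderiv ℝ (fun y => fderiv ℝ H y (EuclideanSpace.single j 1)) x x) 0 := by
    have : HasFDerivAt (fun y => fderiv ℝ H y (EuclideanSpace.single j 1))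
        (fderiv ℝ (fun y => fderiv ℝ H y (EuclideanSpace.single j 1)) x) (x + (0:ℝ) • x) := by
      simpa using (pb_diffg hs hx (EuclideanSpace.single j 1)).hasFDerivAt
    exact this.comp_hasDerivAt (0:ℝ) h1
  have h3 : HasDerivAt (fun _ : ℝ => fderiv ℝ H x (EuclideanSpace.single j 1)) 0 0 :=
    hasDerivAt_const _ _
  refine h2.unique (h3.congr_of_eventuallyEq ?_)
  filter_upwards [lt_mem_nhds (show (-1:ℝ) < 0 by norm_num)] with t ht
  have : x + t • x = (1 + t) • x := by rw [add_smul, one_smul]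
  rw [this, pb_fderiv_smul hh (by linarith) x (pb_diff hs hx)]

lemma pb_grad_coord {n : ℕ} (H : Euc n → ℝ) (x : Euc n) (k : Fin (n+1)) :
    gradient H x k = fderiv ℝ H x (EuclideanSpace.single k 1) := by
  rw [← inner_gradient_left, EuclideanSpace.inner_single_right]; simp

lemma pb_chain {n : ℕ} {H Hs : Euc n → ℝ} {ρ : ℝ} {u v : Euc n} (hρ : 0 < ρ)
    (hs : ContDiffOn ℝ (⊤ : ℕ∞) H {(0 : Euc n)}ᶜ)
    (hss : ContDiffOn ℝ (⊤ : ℕ∞) Hs {(0 : Euc n)}ᶜ)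
    (hu : u ≠ 0) (hv : v ≠ 0) (huv : v = ρ⁻¹ • gradient Hs u) (hsu : Hs u ≠ 0)
    (hid : ∀ x : Euc n, x ≠ 0 → ∀ z, fderiv ℝ H (ρ⁻¹ • gradient Hs x) z = ⟪x, z⟫ / Hs x) :
    ehess n Hs u * ehess n H v = (ρ / Hs u) • (1 : Matrix (Fin (n+1)) (Fin (n+1)) ℝ)
      - (ρ / Hs u ^ 2) • vecMulVec (fun i => gradient Hs u i) (fun i => u i) := by
  have hG : DifferentiableAt ℝ (gradient Hs) u := by
    have := ((InnerProductSpace.toDual ℝ (Euc n)).symm.toContinuousLinearEquiv.differentiableAt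
      (x := fderiv ℝ Hs u)).comp u (pb_diff2 hss hu)
    exact this
  have hB : ∀ i k, ehess n Hs u i k = (fderiv ℝ (gradient Hs) u (EuclideanSpace.single i 1)) k := by
    intro i k
    have h1 : (fun y => fderiv ℝ Hs y (EuclideanSpace.single k 1)) = fun y => gradient Hs y k := by
      funext y; rw [pb_grad_coord]
    have h2 : HasFDerivAt (fun y => gradient Hs y k)
        ((EuclideanSpace.proj (𝕜 := ℝ) k).comp (fderiv ℝ (gradient Hs) u)) u :=
      (EuclideanSpace.proj (𝕜 := ℝ) k).hasFDerivAt.comp u hG.hasFDerivAt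
    rw [ehess, Matrix.of_apply, h1, h2.fderiv]
    rfl
  ext i j
  set g : Euc n → ℝ := fun y => fderiv ℝ H y (EuclideanSpace.single j 1) with hg
  have hL : HasFDerivAt (fun x => g (ρ⁻¹ • gradient Hs x))
      ((fderiv ℝ g v).comp (ρ⁻¹ • fderiv ℝ (gradient Hs) u)) u := by
    have h1 : HasFDerivAt g (fderiv ℝ g v) (ρ⁻¹ • gradient Hs u) := by
      rw [← huv]; exact (pb_diffg hs hv _).hasFDerivAt
    exact h1.comp u (hG.hasFDerivAt.const_smul ρ⁻¹)
  have hR : HasFDerivAt (fun x : Euc n => x j * (Hs x)⁻¹)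
      (u j • (-(Hs u ^ 2)⁻¹ • fderiv ℝ Hs u) + (Hs u)⁻¹ • EuclideanSpace.proj (𝕜 := ℝ) j) u := by
    have h1 : HasFDerivAt (fun x : Euc n => x j) (EuclideanSpace.proj (𝕜 := ℝ) j) u :=
      (EuclideanSpace.proj (𝕜 := ℝ) j).hasFDerivAt
    have h2 : HasFDerivAt (fun x => (Hs x)⁻¹) (-(Hs u ^ 2)⁻¹ • fderiv ℝ Hs u) u :=
      (hasDerivAt_inv hsu).comp_hasFDerivAt u (pb_diff hss hu).hasFDerivAt
    exact h1.mul h2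
  have hE : (fun x : Euc n => x j * (Hs x)⁻¹) =ᶠ[nhds u] (fun x => g (ρ⁻¹ • gradient Hs x)) := by
    filter_upwards [isOpen_compl_singleton.mem_nhds hu] with x hx
    rw [hg]
    simp only
    rw [hid x hx, EuclideanSpace.inner_single_right]
    simp [div_eq_mul_inv]
  have hEq := hL.unique (hR.congr_of_eventuallyEq hE.symm)
  have hEi := congrArg (fun L => L (EuclideanSpace.single i 1)) hEq
  have hsum := pb_sum (fderiv ℝ g v) (fderiv ℝ (gradient Hs) u (EuclideanSpace.single i 1))
  have hBA : (ehess n Hs u * ehess n H v) i j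
      = fderiv ℝ g v (fderiv ℝ (gradient Hs) u (EuclideanSpace.single i 1)) := by
    rw [← hsum, Matrix.mul_apply]
    refine Finset.sum_congr rfl fun k _ => ?_
    rw [hB]; rfl
  simp only [ContinuousLinearMap.comp_apply, _root_.smul_apply,
    _root_.add_apply, map_smul, smul_eq_mul, ← pb_grad_coord] at hEi
  rw [← hBA] at hEi
  have hδ : (EuclideanSpace.proj (𝕜 := ℝ) j) (EuclideanSpace.single i (1:ℝ))
      = (1 : Matrix (Fin (n+1)) (Fin (n+1)) ℝ) i j := by
    simp [Matrix.one_apply, Pi.single_apply, eq_comm]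
  rw [hδ] at hEi
  simp only [Matrix.sub_apply, Matrix.smul_apply, vecMulVec_apply, smul_eq_mul]
  have h3 : (ehess n Hs u * ehess n H v) i j = ρ * (ρ⁻¹ * (ehess n Hs u * ehess n H v) i j) := by
    field_simp
  rw [h3, hEi]
  field_simp
  ring

lemma pb_pos {n : ℕ} {H : Euc n → ℝ} (hh : ∀ c : ℝ, 0 < c → ∀ x : Euc n, H (c • x) = c * H x)
    (hpos : ∀ x ∈ sphere (0 : Euc n) 1, 0 < H x) {x : Euc n} (hx : x ≠ 0) : 0 < H x := by
  have hn : 0 < ‖x‖ := norm_pos_iff.2 hx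
  have h := hpos (‖x‖⁻¹ • x) (by simp [norm_smul, hn.ne'])
  rw [hh _ (inv_pos.2 hn)] at h
  exact pos_of_mul_pos_right h (inv_pos.2 hn).le

lemma pb_key {n : ℕ} {H Hs : Euc n → ℝ} {K Kstar : Set (Euc n)}
    (hK : K = {y : Euc n | ∀ x : Euc n, ⟪x, y⟫ ≤ H x})
    (hhomog : ∀ c : ℝ, 0 < c → ∀ x : Euc n, H (c • x) = c * H x)
    (hconv : ConvexOn ℝ Set.univ H)
    (hsmooth : ContDiffOn ℝ (⊤ : ℕ∞) H {(0 : Euc n)}ᶜ)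
    (hpos : ∀ x ∈ sphere (0 : Euc n) 1, 0 < H x)
    (hKstar : Kstar = {y : Euc n | ∀ x ∈ K, ⟪x, y⟫ ≤ 1})
    (hKstar' : Kstar = {y : Euc n | ∀ x : Euc n, ⟪x, y⟫ ≤ Hs x})
    (hhomogs : ∀ c : ℝ, 0 < c → ∀ x : Euc n, Hs (c • x) = c * Hs x)
    (hconvs : ConvexOn ℝ Set.univ Hs)
    (hsmooths : ContDiffOn ℝ (⊤ : ℕ∞) Hs {(0 : Euc n)}ᶜ)
    (hposs : ∀ x ∈ sphere (0 : Euc n) 1, 0 < Hs x) {x : Euc n} (hx : x ≠ 0) :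
    gradient Hs x ≠ 0 ∧ H (gradient Hs x) = 1 ∧
      ∀ z, fderiv ℝ H (gradient Hs x) z = ⟪x, z⟫ / Hs x := by
  have hsx : 0 < Hs x := pb_pos hhomogs hposs hx
  have hd := pb_diff hsmooths hx
  set y := gradient Hs x with hy
  have hyx : ⟪x, y⟫ = Hs x := by
    rw [real_inner_comm, hy, inner_gradient_left, pb_euler hhomogs hd]
  have hy0 : y ≠ 0 := by
    intro h
    rw [h, inner_zero_right] at hyx
    exact hsx.ne hyx
  have hyK : y ∈ Kstar := by
    rw [hKstar']
    intro z
    rw [real_inner_comm, hy, inner_gradient_left]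
    exact pb_tangent hhomogs hconvs hd z
  have hdy := pb_diff hsmooth hy0
  have hgK : gradient H y ∈ K := by
    rw [hK]
    intro z
    rw [real_inner_comm, inner_gradient_left]
    exact pb_tangent hhomog hconv hdy z
  have hH1 : H y ≤ 1 := by
    rw [hKstar] at hyK
    have := hyK _ hgK
    rwa [inner_gradient_left, pb_euler hhomog hdy] at this
  have hineq : ∀ w : Euc n, w ≠ 0 → ⟪x, w⟫ ≤ Hs x * H w := by
    intro w hw
    have hHw := pb_pos hhomog hpos hw
    have hmem : (H w)⁻¹ • w ∈ Kstar := by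
      rw [hKstar]
      intro k hk
      rw [hK] at hk
      have := hk w
      rw [inner_smul_right, inv_mul_le_iff₀ hHw, real_inner_comm]
      simpa using this
    rw [hKstar'] at hmem
    have := hmem x
    rw [inner_smul_right, inv_mul_le_iff₀ hHw] at this
    linarith
  have hH : H y = 1 := by
    refine le_antisymm hH1 ?_
    have := hineq y hy0
    rw [hyx] at this
    nlinarith
  refine ⟨hy0, hH, fun z => ?_⟩
  have hmin : IsLocalMin (fun w => Hs x * H w - ⟪x, w⟫) y := by
    filter_upwards [isOpen_compl_singleton.mem_nhds hy0] with w hw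
    have := hineq w hw
    rw [hyx, hH]
    linarith
  have hF : HasFDerivAt (fun w => Hs x * H w - ⟪x, w⟫) (Hs x • fderiv ℝ H y - innerSL ℝ x) y :=
    (hdy.hasFDerivAt.const_mul (Hs x)).sub (innerSL ℝ x).hasFDerivAt
  have h0 := hmin.hasFDerivAt_eq_zero hF
  have := congrArg (fun L => L z) h0
  simp at this
  rw [eq_div_iff hsx.ne']
  linarith

lemma pb_bmat {n : ℕ} (H : Euc n → ℝ) (x : Euc n) :
    bmat n H x = ehess n H x + H x • vecMulVec (fun i => x i) (fun i => x i) := by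
  ext i j
  simp [bmat, vecMulVec_apply]

lemma pb_symm {n : ℕ} {H : Euc n → ℝ} {x : Euc n} (h : (bmat n H x).PosDef) :
    (ehess n H x)ᵀ = ehess n H x := by
  have h1 := h.isHermitian.eq
  rw [conjTranspose_eq_transpose_of_trivial, pb_bmat, transpose_add, transpose_smul,
    transpose_vecMulVec] at h1
  exact add_right_cancel h1

lemma pb_final {N p q ρ s a b : ℝ} {m : ℕ} (hN : (m : ℝ) = N) (hρ : 0 < ρ) (hs : 0 < s)
    (hab : b * a = (ρ / s) ^ m) (hb : 0 < b)
    (h : (ρ⁻¹) ^ (p - 1) * (s⁻¹) ^ (N - q) * (a / ρ⁻¹)⁻¹ = 1) (ha : 0 < a) :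
    s ^ (-q - 1) * ρ ^ (N + p) * (b / s)⁻¹ = 1 := by
  have h1 := congrArg Real.log h
  have h2 := congrArg Real.log hab
  rw [Real.log_mul (by positivity) (by positivity), Real.log_mul (by positivity) (by positivity),
    Real.log_rpow (by positivity), Real.log_rpow (by positivity), Real.log_inv,
    Real.log_inv, Real.log_inv, Real.log_div (by positivity) (by positivity), Real.log_inv,
    Real.log_one] at h1
  rw [Real.log_mul (by positivity) (by positivity), Real.log_pow,
    Real.log_div (by positivity) (by positivity), hN] at h2
  refine Real.eq_one_of_pos_of_log_eq_zero (by positivity) ?_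
  rw [Real.log_mul (by positivity) (by positivity), Real.log_mul (by positivity) (by positivity),
    Real.log_rpow (by positivity), Real.log_rpow (by positivity), Real.log_inv,
    Real.log_div (by positivity) (by positivity)]
  linarith

/-- If a smooth, strictly convex body `K ⊂ ℝ^{n+1}` with the origin in its
interior satisfies the isotropic `L_p` dual Minkowski equation `h^{p-1}|Dh|^{n+1-q}𝒦 = 1` on
`S^n`, then its polar body `K*` (with support function `h*` encoded by `Hs`) satisfies the
isotropic `L_{-q}` dual Minkowski equation `(h*)^{-q-1}|Dh*|^{n+1+p}𝒦* = 1` on `S^n`. -/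
theorem polar_body_satisfies_dual_equation
    (n : ℕ) (hn : 2 ≤ n) (p q : ℝ)
    (H : Euc n → ℝ) (K : Set (Euc n))
    (hK : K = {y : Euc n | ∀ x : Euc n, ⟪x, y⟫ ≤ H x})
    (hhomog : ∀ c : ℝ, 0 < c → ∀ x : Euc n, H (c • x) = c * H x)
    (hconv : ConvexOn ℝ Set.univ H)
    (hsmooth : ContDiffOn ℝ (⊤ : ℕ∞) H {(0 : Euc n)}ᶜ)
    (hpos : ∀ x ∈ sphere (0 : Euc n) 1, 0 < H x)
    (hposdef : ∀ x ∈ sphere (0 : Euc n) 1, (bmat n H x).PosDef)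
    (heq : ∀ x ∈ sphere (0 : Euc n) 1,
      H x ^ (p - 1) * ‖gradient H x‖ ^ ((n : ℝ) + 1 - q) * gaussCurv n H x = 1)
    (Hs : Euc n → ℝ) (Kstar : Set (Euc n))
    (hKstar : Kstar = {y : Euc n | ∀ x ∈ K, ⟪x, y⟫ ≤ 1})
    (hKstar' : Kstar = {y : Euc n | ∀ x : Euc n, ⟪x, y⟫ ≤ Hs x})
    (hhomogs : ∀ c : ℝ, 0 < c → ∀ x : Euc n, Hs (c • x) = c * Hs x)
    (hconvs : ConvexOn ℝ Set.univ Hs)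
    (hsmooths : ContDiffOn ℝ (⊤ : ℕ∞) Hs {(0 : Euc n)}ᶜ)
    (hposs : ∀ x ∈ sphere (0 : Euc n) 1, 0 < Hs x)
    (hposdefs : ∀ x ∈ sphere (0 : Euc n) 1, (bmat n Hs x).PosDef) :
    ∀ u ∈ sphere (0 : Euc n) 1,
      Hs u ^ (-q - 1) * ‖gradient Hs u‖ ^ ((n : ℝ) + 1 + p) * gaussCurv n Hs u = 1 := by
  intro u hu
  have hu1 : ‖u‖ = 1 := by simpa using hu
  have hu0 : u ≠ 0 := by intro h; simp [h] at hu1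
  have key := fun {x : Euc n} (hx : x ≠ 0) => pb_key hK hhomog hconv hsmooth hpos hKstar hKstar'
    hhomogs hconvs hsmooths hposs hx
  obtain ⟨hy0, hHy, hgr⟩ := key hu0
  have hs : 0 < Hs u := hposs u hu
  set y := gradient Hs u with hy
  set ρ := ‖y‖ with hρd
  have hρ : 0 < ρ := norm_pos_iff.2 hy0
  set v : Euc n := ρ⁻¹ • y with hvd
  have hv1 : ‖v‖ = 1 := by rw [hvd, norm_smul, norm_inv, norm_norm, inv_mul_cancel₀ hρ.ne']
  have hv : v ∈ sphere (0 : Euc n) 1 := by simpa using hv1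
  have hv0 : v ≠ 0 := by intro h; simp [h] at hv1
  have hHv : H v = ρ⁻¹ := by rw [hvd, hhomog _ (inv_pos.2 hρ), hHy, mul_one]
  have hyu : ⟪u, y⟫ = Hs u := by
    rw [real_inner_comm, hy, inner_gradient_left, pb_euler hhomogs (pb_diff hsmooths hu0)]
  have hid : ∀ x : Euc n, x ≠ 0 → ∀ z, fderiv ℝ H (ρ⁻¹ • gradient Hs x) z = ⟪x, z⟫ / Hs x := by
    intro x hx z
    obtain ⟨h1, -, h2⟩ := key hx
    rw [pb_fderiv_smul hhomog (inv_pos.2 hρ) _ (pb_diff hsmooth h1), h2]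
  have hgv : gradient H v = (Hs u)⁻¹ • u := by
    refine ext_inner_right ℝ fun z => ?_
    rw [inner_gradient_left, hid u hu0, inner_smul_left]
    simp [div_eq_inv_mul]
  have hngv : ‖gradient H v‖ = (Hs u)⁻¹ := by
    rw [hgv, norm_smul, hu1, mul_one, norm_inv, Real.norm_of_nonneg hs.le]
  have hBA := pb_chain hρ hsmooth hsmooths hu0 hv0 hvd hs.ne' hid
  have hAs := pb_symm (hposdef v hv)
  have hBs := pb_symm (hposdefs u hu)
  have hvA := pb_null hhomog hsmooth hv0
  have huB := pb_null hhomogs hsmooths hu0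
  have hAv : ehess n H v *ᵥ (fun i => v i) = 0 := by rw [← hAs, mulVec_transpose, hvA]
  have hBu : ehess n Hs u *ᵥ (fun i => u i) = 0 := by rw [← hBs, mulVec_transpose, huB]
  have hdot : ∀ a b : Euc n, (fun i => a i) ⬝ᵥ (fun i => b i) = ⟪a, b⟫ := by
    intro a b
    rw [PiLp.inner_apply]
    simp [dotProduct, mul_comm]
  have hvu : ⟪v, u⟫ = ρ⁻¹ * Hs u := by
    rw [hvd, inner_smul_left, real_inner_comm, hyu]; simp
  have hd1 := pb_det (ehess n H v) (fun i => v i) (fun i => u i) (H v) hAs hAv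
    (by rw [hdot, real_inner_self_eq_norm_sq, hv1]; norm_num)
    (by rw [hdot, hvu]; positivity)
  have hd2 := pb_det (ehess n Hs u) (fun i => u i) (fun i => y i) (Hs u) hBs hBu
    (by rw [hdot, real_inner_self_eq_norm_sq, hu1]; norm_num)
    (by rw [hdot, hyu]; positivity)
  rw [← pb_bmat, hdot, hvu, hHv] at hd1
  rw [← pb_bmat, hdot, hyu] at hd2
  have hyA : (fun i => y i) ᵥ* ehess n H v = 0 := by
    have : (fun i => y i) = ρ • (fun i => v i) := by
      funext i
      simp [hvd, hρ.ne']
    rw [this, smul_vecMul, hvA, smul_zero]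
  have hprod : (bmat n Hs u).det * (bmat n H v).det = (ρ / Hs u) ^ (n + 1) := by
    rw [hd1, hd2, ← det_mul, add_mul, mul_add, mul_add, hBA, Matrix.mul_smul, mul_vecMulVec, hBu,
      Matrix.smul_mul, vecMulVec_mul, hyA, Matrix.smul_mul, Matrix.mul_smul,
      vecMulVec_mul_vecMulVec, hdot, real_inner_comm, hyu]
    have : ∀ M : Matrix (Fin (n+1)) (Fin (n+1)) ℝ,
      M = (ρ / Hs u) • (1 : Matrix (Fin (n+1)) (Fin (n+1)) ℝ) → M.det = (ρ / Hs u) ^ (n + 1) := by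
      intro M hM
      rw [hM, det_smul]; simp
    apply this
    ext i j
    simp [vecMulVec_apply]
    field_simp
    ring
  have hE := heq v hv
  rw [hngv, hHv, gaussCurv, sigman, hHv] at hE
  rw [gaussCurv, sigman]
  exact pb_final (by push_cast; ring) hρ hs hprod (hposdefs u hu).det_pos hE (hposdef v hv).det_pos
end
end

section
/- Let K ⊂ ℝ^{n+1} be a smooth, strictly convex body with the origin in its interior, with support function h, Gauss curvature 𝒦, inverse Gauss map X = Dh, centro-affine metric g, centro-affine Laplacian Δ, and measure dV = h σ_n dμ. Let f ∈ C²(S^n), let {E_k}_{k=1}^{n+1} be an orthonormal basis of ℝ^{n+1}, and set f_k = f ⟨X, E_k⟩. Then pointwise on S^n: Σ_{k=1}^{n+1} f_k (Δ f_k + n f_k) = f² ⟨∇̄ log(h^{n+2}/𝒦), h X⟩ + f |X|² Δf + f g(∇f, ∇|X|²), where ∇ is the gradient with respect to g. -/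
open MeasureTheory Matrix Metric
open scoped RealInnerProductSpace

noncomputable section

/-- coordinate vectors -/
abbrev ev (n : ℕ) (i : Fin (n + 1)) : Euc n := EuclideanSpace.single i 1

/-- directional derivative -/
def dd {n : ℕ} (a : Euc n) (u : Euc n → ℝ) : Euc n → ℝ := fun y => fderiv ℝ u y a

lemma dd_contDiffAt {n : ℕ} {m k : WithTop ℕ∞} (a : Euc n) {u : Euc n → ℝ} {x : Euc n}
    (h : ContDiffAt ℝ m u x) (hk : k + 1 ≤ m) : ContDiffAt ℝ k (dd a u) x :=
  (h.fderiv_right hk).clm_apply contDiffAt_const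

lemma dd_comm {n : ℕ} (a c : Euc n) {u : Euc n → ℝ} {x : Euc n}
    (h : ContDiffAt ℝ 2 u x) : dd a (dd c u) x = dd c (dd a u) x := by
  have hd : DifferentiableAt ℝ (fderiv ℝ u) x :=
    (h.fderiv_right (m := 1) (by norm_num)).differentiableAt (by norm_num)
  have hs := h.isSymmSndFDerivAt (by simp)
  have key : ∀ p q : Euc n, dd p (dd q u) x = fderiv ℝ (fderiv ℝ u) x p q := by
    intro p q
    unfold dd
    rw [fderiv_clm_apply hd (differentiableAt_const _)]
    simp
  rw [key, key]
  exact hs a c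

lemma euler_gen {n : ℕ} {u : Euc n → ℝ} {x : Euc n} {φ : ℝ → ℝ} {m : ℝ}
    (hu : DifferentiableAt ℝ u x) (hφ : HasDerivAt φ m 1)
    (h : ∀ c : ℝ, 0 < c → u (c • x) = φ c) : fderiv ℝ u x x = m := by
  have h1 : HasDerivAt (fun c : ℝ => c • x) x 1 := by
    simpa using (hasDerivAt_id (1 : ℝ)).smul_const x
  have h2 : HasDerivAt (fun c : ℝ => u (c • x)) (fderiv ℝ u x x) 1 := by
    have := HasFDerivAt.comp_hasDerivAt (f := fun c : ℝ => c • x) (1 : ℝ) (l := u)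
      (l' := fderiv ℝ u x) (by simpa using hu.hasFDerivAt) h1
    exact this
  have h3 : (fun c : ℝ => u (c • x)) =ᶠ[nhds 1] φ := by
    filter_upwards [lt_mem_nhds (show (0 : ℝ) < 1 by norm_num)] with c hc using h c hc
  exact h2.unique (hφ.congr_of_eventuallyEq h3)

lemma normalize_hasFDerivAt {n : ℕ} {x : Euc n} (hx : ‖x‖ = 1) :
    ∃ N : Euc n →L[ℝ] Euc n, HasFDerivAt (fun y : Euc n => ‖y‖⁻¹ • y) N x ∧
      ∀ w, N w = w - ⟪x, w⟫ • x := by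
  have h1 : HasFDerivAt (fun y : Euc n => ‖y‖ ^ 2) (2 • (innerSL ℝ x)) x :=
    (hasStrictFDerivAt_norm_sq x).hasFDerivAt
  have h2 := h1.sqrt (by simp [hx])
  have h3 : HasFDerivAt (fun y : Euc n => ‖y‖) (innerSL ℝ x) x := by
    convert! h2 using 1
    · ext y; rw [Real.sqrt_sq (norm_nonneg y)]
    · ext w; simp [hx]
  have h4 := (HasFDerivAt.comp x (hasDerivAt_inv (x := ‖x‖) (by simp [hx])).hasFDerivAt h3)
  have h5 := HasFDerivAt.smul h4 (hasFDerivAt_id x)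
  refine ⟨_, h5, ?_⟩
  intro w
  simp [hx, sub_eq_add_neg]

lemma fderiv_expand {n : ℕ} (L : Euc n →L[ℝ] ℝ) (w : Euc n) :
    L w = ∑ i, w i * L (ev n i) := by
  have : w = ∑ i, w i • ev n i := by
    ext j
    simp [ev, Pi.single_apply]
  conv_lhs => rw [this]
  simp

lemma gradient_inner {n : ℕ} (u : Euc n → ℝ) (x w : Euc n) :
    ⟪gradient u x, w⟫ = fderiv ℝ u x w := by
  rw [← toDual_gradient]; rfl

lemma gradient_coord {n : ℕ} (u : Euc n → ℝ) (x : Euc n) (i : Fin (n + 1)) :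
    gradient u x i = fderiv ℝ u x (ev n i) := by
  rw [← gradient_inner, EuclideanSpace.inner_single_right]; simp

lemma basis_sum {n : ℕ} (b : OrthonormalBasis (Fin (n + 1)) ℝ (Euc n)) (L : Euc n →L[ℝ] ℝ)
    (X : Euc n) : ∑ k, ⟪X, b k⟫ * L (b k) = L X := by
  conv_rhs => rw [← b.sum_repr' X]
  simp [real_inner_comm]

lemma jacobi {n : ℕ} {A : Euc n → Matrix (Fin (n + 1)) (Fin (n + 1)) ℝ}
    {A' : Fin (n + 1) → Fin (n + 1) → (Euc n →L[ℝ] ℝ)} {x : Euc n}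
    (h : ∀ i j, HasFDerivAt (fun y => A y i j) (A' i j) x) :
    HasFDerivAt (fun y => (A y).det) (∑ i, ∑ j, (A x).adjugate j i • A' i j) x := by
  let F : ContinuousMultilinearMap ℝ (fun _ : Fin (n + 1) => Fin (n + 1) → ℝ) ℝ :=
    ⟨(Matrix.detRowAlternating (R := ℝ) (n := Fin (n + 1))).toMultilinearMap, by
      exact Continuous.matrix_det (A := fun M : Matrix (Fin (n + 1)) (Fin (n + 1)) ℝ => M)
        continuous_id⟩
  have hA : HasFDerivAt (fun y => (fun i j => A y i j : Fin (n + 1) → Fin (n + 1) → ℝ))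
      (ContinuousLinearMap.pi fun i => ContinuousLinearMap.pi fun j => A' i j) x := by
    rw [hasFDerivAt_pi]
    intro i
    rw [hasFDerivAt_pi]
    exact h i
  have h1 := (F.hasFDerivAt (x := fun i j => A x i j)).comp x hA
  convert! h1 using 1
  ext w
  simp only [ContinuousLinearMap.comp_apply, ContinuousMultilinearMap.linearDeriv_apply]
  simp only [_root_.sum_apply, _root_.smul_apply]
  refine Finset.sum_congr rfl fun i _ => ?_
  change _ = ((A x).updateRow i (fun j => A' i j w)).det
  rw [← Matrix.cramer_transpose_apply, Matrix.cramer_eq_adjugate_mulVec, ← Matrix.adjugate_transpose]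
  simp [Matrix.mulVec, dotProduct]

/-- contraction of two matrices -/
def MS {n : ℕ} (M : Matrix (Fin (n + 1)) (Fin (n + 1)) ℝ) (A : Fin (n + 1) → Fin (n + 1) → ℝ) : ℝ :=
  ∑ i, ∑ j, M i j * A i j

lemma MS_add {n : ℕ} (M : Matrix (Fin (n + 1)) (Fin (n + 1)) ℝ)
    (A C : Fin (n + 1) → Fin (n + 1) → ℝ) :
    MS M (fun i j => A i j + C i j) = MS M A + MS M C := by
  simp [MS, mul_add, Finset.sum_add_distrib]

lemma MS_sub {n : ℕ} (M : Matrix (Fin (n + 1)) (Fin (n + 1)) ℝ)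
    (A C : Fin (n + 1) → Fin (n + 1) → ℝ) :
    MS M (fun i j => A i j - C i j) = MS M A - MS M C := by
  simp [MS, mul_sub, Finset.sum_sub_distrib]

lemma MS_smul {n : ℕ} (M : Matrix (Fin (n + 1)) (Fin (n + 1)) ℝ) (c : ℝ)
    (A : Fin (n + 1) → Fin (n + 1) → ℝ) :
    MS M (fun i j => c * A i j) = c * MS M A := by
  simp only [MS, Finset.mul_sum]
  refine Finset.sum_congr rfl fun i _ => Finset.sum_congr rfl fun j _ => by ring

lemma MS_smulM {n : ℕ} (M A : Matrix (Fin (n + 1)) (Fin (n + 1)) ℝ) (c : ℝ) :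
    MS M (fun i j => c * A i j) = c * MS M (fun i j => A i j) := MS_smul M c _

lemma MS_swap {n : ℕ} {M : Matrix (Fin (n + 1)) (Fin (n + 1)) ℝ} (hM : ∀ i j, M i j = M j i)
    (A : Fin (n + 1) → Fin (n + 1) → ℝ) :
    MS M (fun i j => A j i) = MS M A := by
  unfold MS
  rw [Finset.sum_comm]
  refine Finset.sum_congr rfl fun i _ => Finset.sum_congr rfl fun j _ => by rw [hM]

lemma MS_clm {n : ℕ} (M : Matrix (Fin (n + 1)) (Fin (n + 1)) ℝ)
    (A : Fin (n + 1) → Fin (n + 1) → (Euc n →L[ℝ] ℝ)) :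
    ∃ L : Euc n →L[ℝ] ℝ, ∀ w, L w = MS M (fun i j => A i j w) :=
  ⟨∑ i, ∑ j, M i j • A i j, fun w => by simp [MS]⟩

/-- contraction against the inverse -/
lemma MS_inv_mulVec {n : ℕ} {B : Matrix (Fin (n + 1)) (Fin (n + 1)) ℝ} (hB : IsUnit B.det)
    (a w : Fin (n + 1) → ℝ) : MS B⁻¹ (fun i j => a i * (B *ᵥ w) j) = ∑ i, a i * w i := by
  have h : B⁻¹ *ᵥ (B *ᵥ w) = w := by
    rw [Matrix.mulVec_mulVec, Matrix.nonsing_inv_mul _ hB, Matrix.one_mulVec]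
  unfold MS
  refine Finset.sum_congr rfl fun i _ => ?_
  rw [← congrFun h i]
  conv_rhs => rw [Matrix.mulVec, dotProduct, Finset.mul_sum]
  refine Finset.sum_congr rfl fun j _ => by ring

lemma MS_trace {n : ℕ} {M A : Matrix (Fin (n + 1)) (Fin (n + 1)) ℝ}
    (hM : ∀ i j, M i j = M j i) :
    Matrix.trace (M * A) = MS M (fun i j => A i j) := by
  rw [← MS_swap hM]
  simp [Matrix.trace, Matrix.mul_apply, MS]

lemma MS_self {n : ℕ} {B : Matrix (Fin (n + 1)) (Fin (n + 1)) ℝ} (hB : IsUnit B.det)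
    (hM : ∀ i j, B⁻¹ i j = B⁻¹ j i) : MS B⁻¹ (fun i j => B i j) = n + 1 := by
  rw [← MS_trace hM, Matrix.nonsing_inv_mul _ hB]
  simp

lemma ehess_eq {n : ℕ} (u : Euc n → ℝ) (x : Euc n) (i j : Fin (n + 1)) :
    ehess n u x i j = dd (ev n i) (dd (ev n j) u) x := rfl

lemma dd_mul {n : ℕ} (a : Euc n) {u v : Euc n → ℝ} {x : Euc n}
    (hu : DifferentiableAt ℝ u x) (hv : DifferentiableAt ℝ v x) :
    dd a (fun y => u y * v y) x = u x * dd a v x + v x * dd a u x := by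
  unfold dd
  rw [fderiv_fun_mul hu hv]
  simp

lemma dd_congr {n : ℕ} (a : Euc n) {u v : Euc n → ℝ} {x : Euc n} (h : u =ᶠ[nhds x] v) :
    dd a u x = dd a v x := by
  unfold dd
  rw [h.fderiv_eq]

lemma ehess_mul {n : ℕ} {u v : Euc n → ℝ} {x : Euc n}
    (hu : ContDiffAt ℝ 2 u x) (hv : ContDiffAt ℝ 2 v x) (i j : Fin (n + 1)) :
    ehess n (fun y => u y * v y) x i j = u x * ehess n v x i j + v x * ehess n u x i j
      + dd (ev n i) u x * dd (ev n j) v x + dd (ev n i) v x * dd (ev n j) u x := by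
  simp only [ehess_eq]
  have hu' := hu.differentiableAt (by norm_num)
  have hv' := hv.differentiableAt (by norm_num)
  have hdu := (dd_contDiffAt (k := 1) (ev n j) hu (by norm_num)).differentiableAt (by norm_num)
  have hdv := (dd_contDiffAt (k := 1) (ev n j) hv (by norm_num)).differentiableAt (by norm_num)
  have h1 : dd (ev n j) (fun y => u y * v y) =ᶠ[nhds x]
      fun y => u y * dd (ev n j) v y + v y * dd (ev n j) u y := by
    filter_upwards [hu.eventually (by simp), hv.eventually (by simp)] with y h1 h2
    exact dd_mul _ (h1.differentiableAt (by norm_num)) (h2.differentiableAt (by norm_num))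
  rw [dd_congr _ h1]
  have h2 : dd (ev n i) (fun y => u y * dd (ev n j) v y + v y * dd (ev n j) u y) x
      = dd (ev n i) (fun y => u y * dd (ev n j) v y) x
        + dd (ev n i) (fun y => v y * dd (ev n j) u y) x := by
    unfold dd at hdu hdv ⊢
    rw [fderiv_fun_add (hu'.fun_mul hdv) (hv'.fun_mul hdu)]
    simp
  rw [h2, dd_mul _ hu' hdv, dd_mul _ hv' hdu]
  ring

lemma homog0_normalize {n : ℕ} {u : Euc n → ℝ}
    (hu0 : ∀ c : ℝ, 0 < c → ∀ x : Euc n, u (c • x) = u x) :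
    (fun y : Euc n => u (‖y‖⁻¹ • y)) = u := by
  ext y
  by_cases hy : y = 0
  · simp [hy]
  · exact hu0 _ (by positivity) y

lemma caLap_formula {n : ℕ} {H u : Euc n → ℝ} {x : Euc n}
    (hB : IsUnit (bmat n H x).det) (hM : ∀ i j, (bmat n H x)⁻¹ i j = (bmat n H x)⁻¹ j i)
    (hH : ContDiffAt ℝ 2 H x) (hu : ContDiffAt ℝ 2 u x)
    (hu0 : ∀ c : ℝ, 0 < c → ∀ x : Euc n, u (c • x) = u x) :
    caLap n H u x = H x * MS (bmat n H x)⁻¹ (fun i j => ehess n u x i j)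
      + 2 * MS (bmat n H x)⁻¹ (fun i j => dd (ev n i) H x * dd (ev n j) u x) := by
  unfold caLap
  rw [MS_trace hM]
  have h0 : ∀ y, u (‖y‖⁻¹ • y) = u y := congrFun (homog0_normalize hu0)
  simp only [h0]
  have h1 : ∀ i j, bmat n (fun y => H y * u y) x i j = u x * bmat n H x i j
      + H x * ehess n u x i j + dd (ev n i) H x * dd (ev n j) u x
      + dd (ev n j) H x * dd (ev n i) u x := by
    intro i j
    simp only [bmat, Matrix.add_apply, Matrix.of_apply]
    rw [ehess_mul hH hu]
    ring
  simp only [h1]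
  rw [MS_add, MS_add, MS_add, MS_smulM, MS_smulM, MS_self hB hM,
    MS_swap hM (fun i j => dd (ev n i) H x * dd (ev n j) u x)]
  ring

lemma caLap_mul {n : ℕ} {H u v : Euc n → ℝ} {x : Euc n}
    (hB : IsUnit (bmat n H x).det) (hM : ∀ i j, (bmat n H x)⁻¹ i j = (bmat n H x)⁻¹ j i)
    (hH : ContDiffAt ℝ 2 H x) (hu : ContDiffAt ℝ 2 u x) (hv : ContDiffAt ℝ 2 v x)
    (hu0 : ∀ c : ℝ, 0 < c → ∀ x : Euc n, u (c • x) = u x)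
    (hv0 : ∀ c : ℝ, 0 < c → ∀ x : Euc n, v (c • x) = v x) :
    caLap n H (fun y => u y * v y) x = u x * caLap n H v x + v x * caLap n H u x
      + 2 * H x * MS (bmat n H x)⁻¹ (fun i j => dd (ev n i) u x * dd (ev n j) v x) := by
  rw [caLap_formula hB hM hH (hu.mul hv) (fun c hc y => by rw [hu0 c hc, hv0 c hc]),
    caLap_formula hB hM hH hu hu0, caLap_formula hB hM hH hv hv0]
  simp only [ehess_mul hu hv, dd_mul _ (hu.differentiableAt (by norm_num))
    (hv.differentiableAt (by norm_num))]
  have h1 : ∀ i j, dd (ev n i) H x * (u x * dd (ev n j) v x + v x * dd (ev n j) u x)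
      = u x * (dd (ev n i) H x * dd (ev n j) v x) + v x * (dd (ev n i) H x * dd (ev n j) u x) := by
    intros; ring
  have h2 : ∀ i j, dd (ev n i) v x * dd (ev n j) u x = dd (ev n j) u x * dd (ev n i) v x := by
    intros; ring
  simp only [h1, h2]
  rw [MS_add, MS_add, MS_add, MS_add, MS_smulM, MS_smulM, MS_smul, MS_smul,
    MS_swap hM (fun i j => dd (ev n i) u x * dd (ev n j) v x)]
  ring

lemma dd_homog1 {n : ℕ} {H : Euc n → ℝ} (a : Euc n)
    (h : ∀ c : ℝ, 0 < c → ∀ x : Euc n, H (c • x) = c * H x) :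
    ∀ c : ℝ, 0 < c → ∀ x : Euc n, dd a H (c • x) = dd a H x := by
  intro c hc x
  have h1 := fderiv_comp_smul (𝕜 := ℝ) (f := H) (x := x) c
  have h2 : (fun y : Euc n => H (c • y)) = c • H := by ext y; simp [h c hc]
  rw [h2, fderiv_const_smul_field, Pi.smul_apply] at h1
  have h3 := congrArg (fun L => c⁻¹ * L a) h1
  simp only [_root_.smul_apply, smul_eq_mul] at h3
  rw [inv_mul_cancel_left₀ hc.ne', inv_mul_cancel_left₀ hc.ne'] at h3
  exact h3.symm

lemma dd_homog0 {n : ℕ} {u : Euc n → ℝ} (a : Euc n)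
    (h : ∀ c : ℝ, 0 < c → ∀ x : Euc n, u (c • x) = u x) :
    ∀ c : ℝ, 0 < c → ∀ x : Euc n, dd a u (c • x) = c⁻¹ * dd a u x := by
  intro c hc x
  have h1 := fderiv_comp_smul (𝕜 := ℝ) (f := u) (x := x) c
  have h2 : (fun y : Euc n => u (c • y)) = u := by ext y; simp [h c hc]
  rw [h2] at h1
  unfold dd
  rw [h1]
  simp only [_root_.smul_apply, smul_eq_mul]
  rw [inv_mul_cancel_left₀ hc.ne']

lemma third_symm {n : ℕ} {H : Euc n → ℝ} {x : Euc n} (hH : ContDiffAt ℝ 3 H x)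
    (w : Euc n) (i j : Fin (n + 1)) :
    ehess n (dd w H) x i j = fderiv ℝ (fun y => ehess n H y i j) x w := by
  rw [ehess_eq]
  have h1 : dd (ev n j) (dd w H) =ᶠ[nhds x] dd w (dd (ev n j) H) := by
    filter_upwards [hH.eventually (by simp)] with y hy
    exact dd_comm _ _ (hy.of_le (by norm_num))
  rw [dd_congr _ h1, dd_comm _ _ (dd_contDiffAt _ hH (by norm_num))]
  rfl

section
variable {n : ℕ} {H : Euc n → ℝ} {x : Euc n}

lemma Hx_coord (hH : ContDiffAt ℝ 3 H x)
    (h : ∀ c : ℝ, 0 < c → ∀ x : Euc n, H (c • x) = c * H x) :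
    fderiv ℝ H x x = H x :=
  euler_gen (φ := fun c => c * H x) (hH.differentiableAt (by norm_num))
    (by simpa using (hasDerivAt_id (1 : ℝ)).mul_const (H x)) (fun c hc => h c hc x)

lemma ddH_x (hH : ContDiffAt ℝ 3 H x)
    (h : ∀ c : ℝ, 0 < c → ∀ x : Euc n, H (c • x) = c * H x) (a : Euc n) :
    fderiv ℝ (dd a H) x x = 0 :=
  euler_gen (φ := fun _ => dd a H x)
    ((dd_contDiffAt (k := 2) a hH (by norm_num)).differentiableAt (by norm_num))
    (hasDerivAt_const _ _) (fun c hc => dd_homog1 a h c hc x)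

lemma ehess_diff (hH : ContDiffAt ℝ 3 H x) (i j : Fin (n + 1)) :
    DifferentiableAt ℝ (fun y => ehess n H y i j) x :=
  (dd_contDiffAt (k := 1) (ev n i) (dd_contDiffAt (k := 2) (ev n j) hH (by norm_num))
    (by norm_num)).differentiableAt (by norm_num)

lemma ehess_x (hH : ContDiffAt ℝ 3 H x)
    (h : ∀ c : ℝ, 0 < c → ∀ x : Euc n, H (c • x) = c * H x) (i j : Fin (n + 1)) :
    fderiv ℝ (fun y => ehess n H y i j) x x = - ehess n H x i j := by
  refine euler_gen (φ := fun c => c⁻¹ * ehess n H x i j) (ehess_diff hH i j) ?_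
    (fun c hc => dd_homog0 (ev n i) (dd_homog1 (ev n j) h) c hc x)
  simpa using (hasDerivAt_inv (x := (1 : ℝ)) (by norm_num)).mul_const (ehess n H x i j)

lemma ehess_symm (hH : ContDiffAt ℝ 3 H x) (i j : Fin (n + 1)) :
    ehess n H x i j = ehess n H x j i :=
  dd_comm _ _ (hH.of_le (by norm_num))

lemma ehess_sum (w : Euc n) (j : Fin (n + 1)) :
    fderiv ℝ (dd (ev n j) H) x w = ∑ i, w i * ehess n H x i j :=
  fderiv_expand _ _

lemma bmat_mulVec (hH : ContDiffAt ℝ 3 H x) (w : Euc n) (j : Fin (n + 1)) :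
    (bmat n H x *ᵥ (fun i => w i)) j
      = fderiv ℝ (dd (ev n j) H) x w + H x * (∑ i, x i * w i) * x j := by
  rw [ehess_sum]
  simp only [Matrix.mulVec, dotProduct, bmat, Matrix.add_apply, Matrix.of_apply, add_mul,
    Finset.sum_add_distrib]
  congr 1
  · refine Finset.sum_congr rfl fun i _ => by rw [ehess_symm hH]; ring
  · rw [Finset.mul_sum, Finset.sum_mul]
    refine Finset.sum_congr rfl fun i _ => by ring

lemma sum_sq_one (hx : ‖x‖ = 1) : ∑ i, x i * x i = 1 := by
  have := EuclideanSpace.real_norm_sq_eq x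
  rw [hx] at this
  simp only [pow_two] at this
  linarith

lemma bmat_x (hH : ContDiffAt ℝ 3 H x) (hx : ‖x‖ = 1)
    (h : ∀ c : ℝ, 0 < c → ∀ x : Euc n, H (c • x) = c * H x) (j : Fin (n + 1)) :
    (bmat n H x *ᵥ (fun i => x i)) j = H x * x j := by
  rw [bmat_mulVec hH, ddH_x hH h, sum_sq_one hx]; ring

lemma MS_x (hH : ContDiffAt ℝ 3 H x) (hx : ‖x‖ = 1) (hp : 0 < H x)
    (h : ∀ c : ℝ, 0 < c → ∀ x : Euc n, H (c • x) = c * H x)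
    (hB : IsUnit (bmat n H x).det) (a : Fin (n + 1) → ℝ) :
    MS (bmat n H x)⁻¹ (fun i j => a i * x j) = (∑ i, a i * x i) / H x := by
  have h1 := MS_inv_mulVec hB a (fun i => x i)
  simp only [bmat_x hH hx h] at h1
  rw [← h1, eq_div_iff hp.ne', mul_comm, ← MS_smul]
  congr 1; ext i j; ring

/-- derivative of `log Q`. -/
lemma logQ_deriv (hH : ContDiffAt ℝ 3 H x) (hp : 0 < H x)
    (hd : 0 < (bmat n H x).det) :
    ∃ L : Euc n →L[ℝ] ℝ, HasFDerivAt (logQ n H) L x ∧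
      ∀ w, L w = (n + 1) * (fderiv ℝ H x w / H x)
        + MS (bmat n H x)⁻¹ᵀ (fun i j => fderiv ℝ (fun y => ehess n H y i j) x w
            + (x i * x j) * fderiv ℝ H x w + H x * (x i * w j + x j * w i)) := by
  have hHd := (hH.differentiableAt (by norm_num)).hasFDerivAt
  have hcoord : ∀ i : Fin (n + 1), HasFDerivAt (fun y : Euc n => y i)
      (EuclideanSpace.proj i : Euc n →L[ℝ] ℝ) x := fun i =>
    (EuclideanSpace.proj i : Euc n →L[ℝ] ℝ).hasFDerivAt
  have hent : ∀ i j, HasFDerivAt (fun y => bmat n H y i j) _ x := fun i j =>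
    ((ehess_diff hH i j).hasFDerivAt).fun_add (hHd.fun_mul ((hcoord i).fun_mul (hcoord j)))
  have hdet := jacobi hent
  have h1 := ((hHd.log hp.ne').const_mul ((n : ℝ) + 1)).fun_add (hdet.log hd.ne')
  have hev : logQ n H =ᶠ[nhds x]
      fun y => ((n : ℝ) + 1) * Real.log (H y) + Real.log (bmat n H y).det := by
    filter_upwards [hHd.continuousAt.eventually (lt_mem_nhds hp),
      hdet.continuousAt.eventually (lt_mem_nhds hd)] with y h2 h3
    simp only [logQ, gaussCurv, sigman]
    have : H y ^ (n + 2) / ((bmat n H y).det / H y)⁻¹ = H y ^ (n + 1) * (bmat n H y).det := by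
      have := h2.ne'
      have := h3.ne'
      field_simp
      ring
    rw [this, Real.log_mul (by positivity) (by positivity), Real.log_pow]
    push_cast; ring
  refine ⟨_, h1.congr_of_eventuallyEq hev, ?_⟩
  intro w
  simp only [_root_.add_apply, _root_.smul_apply, _root_.sum_apply, smul_eq_mul]
  congr 1
  · ring
  · unfold MS
    rw [Finset.mul_sum]
    refine Finset.sum_congr rfl fun i _ => ?_
    rw [Finset.mul_sum]
    refine Finset.sum_congr rfl fun j _ => ?_
    rw [Matrix.transpose_apply, Matrix.inv_def, Matrix.smul_apply, Ring.inverse_eq_inv']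
    simp
    ring
end

/-- For a smooth, strictly convex body `K ⊂ ℝ^{n+1}` with the origin in its
interior, `f ∈ C²(S^n)` (encoded 0-homogeneously), an orthonormal basis `{E_k}` of `ℝ^{n+1}`
and `f_k = f⟨X, E_k⟩`, pointwise on `S^n`:
`Σ_k f_k (Δf_k + n f_k) = f²⟨∇̄ log(h^{n+2}/𝒦), hX⟩ + f|X|²Δf + f g(∇f, ∇|X|²)`. -/
theorem pointwise_identity_for_fk
    (n : ℕ) (hn : 2 ≤ n)
    (H : Euc n → ℝ) (K : Set (Euc n))
    (hK : K = {y : Euc n | ∀ x : Euc n, ⟪x, y⟫ ≤ H x})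
    (hhomog : ∀ c : ℝ, 0 < c → ∀ x : Euc n, H (c • x) = c * H x)
    (hconv : ConvexOn ℝ Set.univ H)
    (hsmooth : ContDiffOn ℝ (⊤ : ℕ∞) H {(0 : Euc n)}ᶜ)
    (hpos : ∀ x ∈ sphere (0 : Euc n) 1, 0 < H x)
    (hposdef : ∀ x ∈ sphere (0 : Euc n) 1, (bmat n H x).PosDef)
    (f : Euc n → ℝ)
    (hf0 : ∀ c : ℝ, 0 < c → ∀ x : Euc n, f (c • x) = f x)
    (hfC2 : ContDiffOn ℝ 2 f {(0 : Euc n)}ᶜ)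
    (b : OrthonormalBasis (Fin (n + 1)) ℝ (Euc n)) :
    ∀ x ∈ sphere (0 : Euc n) 1,
      (∑ k : Fin (n + 1), (f x * ⟪gradient H x, b k⟫) *
          (caLap n H (fun y => f y * ⟪gradient H y, b k⟫) x
            + n * (f x * ⟪gradient H x, b k⟫)))
        = (f x) ^ 2 * ⟪sphGrad n (logQ n H) x, H x • gradient H x⟫
            + f x * ‖gradient H x‖ ^ 2 * caLap n H f x
            + f x * gInner n H f (fun y => ‖gradient H y‖ ^ 2) x := by
  intro x hxs
  have hx : ‖x‖ = 1 := by simpa using hxs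
  have hx0 : x ≠ 0 := by rintro rfl; simp at hx
  have hp : 0 < H x := hpos x hxs
  have hd : 0 < (bmat n H x).det := (hposdef x hxs).det_pos
  have hB : IsUnit (bmat n H x).det := hd.ne'.isUnit
  have hnhds : ({(0 : Euc n)}ᶜ : Set (Euc n)) ∈ nhds x := isOpen_compl_singleton.mem_nhds hx0
  have hH : ContDiffAt ℝ 3 H x :=
    (hsmooth.contDiffAt hnhds).of_le (WithTop.coe_le_coe.2 (le_top : (3 : ℕ∞) ≤ ⊤))
  have hH2 : ContDiffAt ℝ 2 H x := hH.of_le (by norm_num)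
  have hf : ContDiffAt ℝ 2 f x := hfC2.contDiffAt hnhds
  have hMt : (bmat n H x)⁻¹ᵀ = (bmat n H x)⁻¹ := by
    have := (hposdef x hxs).isHermitian.inv
    simpa [Matrix.IsHermitian, Matrix.conjTranspose_eq_transpose_of_trivial] using this
  have hM : ∀ i j, (bmat n H x)⁻¹ i j = (bmat n H x)⁻¹ j i := fun i j => by
    conv_lhs => rw [← hMt]
    rfl
  set X : Euc n := gradient H x with hX
  have hXi : ∀ i, dd (ev n i) H x = X i := fun i => (gradient_coord H x i).symm
  have hXX : fderiv ℝ H x X = ‖X‖ ^ 2 := by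
    rw [← gradient_inner, ← hX, real_inner_self_eq_norm_sq]
  have hXx : ∑ i, X i * x i = H x := by
    rw [← Hx_coord hH hhomog, fderiv_expand]
    refine Finset.sum_congr rfl fun i _ => by rw [← hXi]; unfold dd; ring
  have hXsq : ∑ i, X i * X i = ‖X‖ ^ 2 := by
    rw [EuclideanSpace.real_norm_sq_eq]
    refine Finset.sum_congr rfl fun i _ => by ring
  have hXk : ∀ w : Euc n, (fun y => ⟪gradient H y, w⟫) = dd w H := fun w => by
    ext y; exact gradient_inner H y w
  have hC : ∀ w, ContDiffAt ℝ 2 (dd w H) x := fun w => dd_contDiffAt w hH (by norm_num)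
  have hCd : ∀ w, DifferentiableAt ℝ (dd w H) x := fun w => (hC w).differentiableAt (by norm_num)
  obtain ⟨Q, hQ⟩ := MS_clm (bmat n H x)⁻¹ (fun i j => fderiv ℝ (fun y => ehess n H y i j) x)
  obtain ⟨R, hR⟩ := MS_clm (bmat n H x)⁻¹ (fun i j => X i • fderiv ℝ (dd (ev n j) H) x)
  obtain ⟨P, hP⟩ := MS_clm (bmat n H x)⁻¹
    (fun i j => dd (ev n i) f x • fderiv ℝ (dd (ev n j) H) x)
  simp only [_root_.smul_apply, smul_eq_mul] at hR hP
  have hcomm : ∀ w j, dd (ev n j) (dd w H) x = fderiv ℝ (dd (ev n j) H) x w := fun w j =>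
    dd_comm _ _ hH2
  -- left side
  have hlap : ∀ w, caLap n H (dd w H) x = H x * Q w + 2 * R w := by
    intro w
    rw [caLap_formula hB hM hH2 (hC w) (dd_homog1 w hhomog), hQ, hR]
    simp only [third_symm hH, hXi, hcomm]
  have hlapf : ∀ w, caLap n H (fun y => f y * ⟪gradient H y, w⟫) x
      = f x * (H x * Q w + 2 * R w) + dd w H x * caLap n H f x + 2 * H x * P w := by
    intro w
    have : (fun y => f y * ⟪gradient H y, w⟫) = fun y => f y * dd w H y := by
      ext y; rw [gradient_inner]; rfl
    rw [this, caLap_mul hB hM hH2 hf (hC w) hf0 (dd_homog1 w hhomog), hlap, hP]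
    simp only [hcomm]
  have hLHS : (∑ k : Fin (n + 1), (f x * ⟪X, b k⟫) *
          (caLap n H (fun y => f y * ⟪gradient H y, b k⟫) x + n * (f x * ⟪X, b k⟫)))
      = f x ^ 2 * (H x * Q X + 2 * R X) + f x * ‖X‖ ^ 2 * caLap n H f x
        + 2 * H x * f x * P X + n * f x ^ 2 * ‖X‖ ^ 2 := by
    have e := basis_sum b ((f x ^ 2 * H x) • Q + (2 * f x ^ 2) • R
      + (f x * caLap n H f x + n * f x ^ 2) • fderiv ℝ H x + (2 * H x * f x) • P) X
    simp only [_root_.add_apply, _root_.smul_apply, smul_eq_mul, hXX] at e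
    trans (f x ^ 2 * H x * Q X + 2 * f x ^ 2 * R X
      + (f x * caLap n H f x + n * f x ^ 2) * ‖X‖ ^ 2 + 2 * H x * f x * P X)
    · rw [← e]
      refine Finset.sum_congr rfl fun k _ => ?_
      rw [hlapf, hX, gradient_inner]
      unfold dd
      ring
    · ring
  -- the value of R X
  have hxX : ∑ i, x i * X i = H x := by
    rw [← hXx]; exact Finset.sum_congr rfl fun i _ => mul_comm _ _
  have hRX : R X = ‖X‖ ^ 2 - H x ^ 2 := by
    rw [hR]
    have h1 : ∀ i j, X i * fderiv ℝ (dd (ev n j) H) x X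
        = X i * (bmat n H x *ᵥ (fun i => X i)) j - H x ^ 2 * (X i * x j) := by
      intro i j
      rw [bmat_mulVec hH, hxX]; ring
    simp only [h1]
    rw [MS_sub, MS_smul, MS_inv_mulVec hB, MS_x hH hx hp hhomog hB, hXsq, hXx,
      div_self hp.ne', mul_one]
  -- the gInner term
  have hg : gInner n H f (fun y => ‖gradient H y‖ ^ 2) x = 2 * H x * P X := by
    have hn0 : ∀ c : ℝ, 0 < c → ∀ y : Euc n, ‖gradient H (c • y)‖ ^ 2 = ‖gradient H y‖ ^ 2 := by
      intro c hc y
      have : gradient H (c • y) = gradient H y := by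
        ext i
        rw [gradient_coord, gradient_coord]
        exact dd_homog1 (ev n i) hhomog c hc y
      rw [this]
    have hs1 : ∀ j, sphGrad n f x j = dd (ev n j) f x := by
      intro j
      unfold sphGrad
      rw [homog0_normalize hf0, gradient_coord]; rfl
    have hs2 : ∀ i, sphGrad n (fun y => ‖gradient H y‖ ^ 2) x i
        = 2 * fderiv ℝ (dd (ev n i) H) x X := by
      intro i
      unfold sphGrad
      rw [homog0_normalize (u := fun y => ‖gradient H y‖ ^ 2) hn0, gradient_coord]
      have e1 : (fun y => ‖gradient H y‖ ^ 2) = fun y => ∑ j, dd (ev n j) H y ^ 2 := by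
        ext y
        rw [EuclideanSpace.real_norm_sq_eq]
        refine Finset.sum_congr rfl fun j _ => by rw [gradient_coord]; rfl
      rw [e1]
      have e2 : HasFDerivAt (fun y => ∑ j, dd (ev n j) H y ^ 2) _ x :=
        HasFDerivAt.fun_sum (u := Finset.univ) fun j _ => ((hCd (ev n j)).hasFDerivAt.pow 2)
      rw [e2.fderiv, ehess_sum, Finset.mul_sum]
      simp only [_root_.sum_apply, _root_.smul_apply, smul_eq_mul]
      refine Finset.sum_congr rfl fun j _ => ?_
      rw [hXi, ehess_symm hH, ehess_eq]
      unfold dd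
      simp
      ring
    unfold gInner
    simp only [hs1, hs2]
    rw [hP, ← MS_swap hM]
    simp only [MS, Matrix.mulVec, dotProduct, Finset.mul_sum, Finset.sum_mul]
    refine Finset.sum_congr rfl fun i _ => Finset.sum_congr rfl fun j _ => by ring
  -- the log term
  have hlog : ⟪sphGrad n (logQ n H) x, H x • X⟫
      = H x * Q X + (n + 2) * ‖X‖ ^ 2 - 2 * H x ^ 2 := by
    obtain ⟨L, hL, hLw⟩ := logQ_deriv hH hp hd
    obtain ⟨N, hN, hNw⟩ := normalize_hasFDerivAt hx
    have hcomp : HasFDerivAt (fun y : Euc n => logQ n H (‖y‖⁻¹ • y)) (L.comp N) x := by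
      refine HasFDerivAt.comp (g := logQ n H) x ?_ hN
      simpa [hx] using hL
    have hin : ⟪x, X⟫ = H x := by
      rw [real_inner_comm, hX, gradient_inner, Hx_coord hH hhomog]
    unfold sphGrad
    rw [gradient_inner, hcomp.fderiv, ContinuousLinearMap.comp_apply, map_smul, map_smul, hNw, hin,
      hLw, hMt]
    set v : Euc n := X - H x • x with hv
    have hDv : fderiv ℝ H x v = ‖X‖ ^ 2 - H x ^ 2 := by
      rw [hv, map_sub, map_smul, hXX, Hx_coord hH hhomog, smul_eq_mul]; ring
    have hvx : ∑ i, v i * x i = 0 := by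
      have : ∀ i, v i * x i = X i * x i - H x * (x i * x i) := fun i => by
        simp [hv]; ring
      simp only [this, Finset.sum_sub_distrib, ← Finset.mul_sum]
      rw [hXx, sum_sq_one hx]; ring
    have hxx : MS (bmat n H x)⁻¹ (fun i j => x i * x j) = 1 / H x := by
      rw [MS_x hH hx hp hhomog hB (fun i => x i), sum_sq_one hx]
    have hvx' : MS (bmat n H x)⁻¹ (fun i j => v i * x j) = 0 := by
      rw [MS_x hH hx hp hhomog hB (fun i => v i), hvx, zero_div]
    have hQx : Q x = - n := by
      rw [hQ]
      have : ∀ i j, fderiv ℝ (fun y => ehess n H y i j) x x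
          = H x * (x i * x j) - bmat n H x i j := by
        intro i j
        rw [ehess_x hH hhomog]; simp [bmat]
      simp only [this]
      have e := MS_sub (bmat n H x)⁻¹ (fun i j => H x * (x i * x j)) (fun i j => bmat n H x i j)
      rw [MS_self hB hM, MS_smul, hxx] at e
      rw [e]
      field_simp
      ring
    have hQv : Q v = Q X + H x * n := by
      rw [hv, map_sub, map_smul, hQx, smul_eq_mul]; ring
    have hsum : MS (bmat n H x)⁻¹ (fun i j => fderiv ℝ (fun y => ehess n H y i j) x v
            + (x i * x j) * fderiv ℝ H x v + H x * (x i * v j + x j * v i))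
        = Q v + fderiv ℝ H x v * (1 / H x) := by
      have h1 : ∀ i j, (x i * x j) * fderiv ℝ H x v = fderiv ℝ H x v * (x i * x j) := by
        intros; ring
      have h2 : ∀ i j, x i * v j + x j * v i = v j * x i + v i * x j := by intros; ring
      simp only [h1, h2]
      rw [MS_add, MS_add, MS_smul, MS_smul, MS_add, hxx,
        MS_swap hM (fun i j => v i * x j), hvx', ← hQ]
      ring
    rw [hsum, hQv, hDv, smul_eq_mul]
    field_simp
    ring
  rw [hLHS, hRX, hg, hlog]
  ring
end
end
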